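/- arXiv:1504.06681 — 2 statements merged into one kernel-verified Lean document; each statement's English description precedes it below -/
import Mathlib

section
/- Let y, ŷ ∈ (ℝᵐ)^T, let x̂ be a minimizer of x ↦ p(x; ŷ) and x* a minimizer of x ↦ p(x; y) over (ℝⁿ)^T. Then the suboptimality of the open-loop plan computed from the predictions ŷ satisfies p(x̂; y) − p(x*; y) ≤ Σ_{t=1}^T (1/2)‖P(ŷ_t − y_t)‖₂². -/
open Finset

noncomputable def norm2sq {m : ℕ} (v : Fin m → ℝ) : ℝ := ∑ i, (v i) ^ 2
noncomputable def norm1 {n : ℕ} (v : Fin n → ℝ) : ℝ := ∑ i, |v i|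

noncomputable def pinv {m n : ℕ} (K : Matrix (Fin m) (Fin n) ℝ) :
    Matrix (Fin n) (Fin m) ℝ := (K.transpose * K)⁻¹ * K.transpose

noncomputable def proj {m n : ℕ} (K : Matrix (Fin m) (Fin n) ℝ) :
    Matrix (Fin m) (Fin m) ℝ := K * pinv K

noncomputable def trackCost {m n : ℕ} (β : ℝ) (K : Matrix (Fin m) (Fin n) ℝ)
    (T : ℕ) (y : ℕ → Fin m → ℝ) (x : ℕ → Fin n → ℝ) : ℝ :=
  ∑ t ∈ Finset.Icc 1 T,
    ((1 / 2) * norm2sq (y t - K.mulVec (x t)) + β * norm1 (x t - x (t - 1)))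

theorem aux_norm2sq_nonneg {m : ℕ} (v : Fin m → ℝ) : 0 ≤ norm2sq v :=
  Finset.sum_nonneg fun i _ => sq_nonneg (v i)

theorem aux_norm2sq_comb {m : ℕ} (a b : Fin m → ℝ) (s : ℝ) :
    norm2sq ((1 - s) • a + s • b)
      = (1 - s) * norm2sq a + s * norm2sq b - s * (1 - s) * norm2sq (a - b) := by
  simp only [norm2sq, Finset.mul_sum, ← Finset.sum_add_distrib, ← Finset.sum_sub_distrib]
  refine Finset.sum_congr rfl fun i _ => ?_
  simp only [Pi.add_apply, Pi.smul_apply, Pi.sub_apply, smul_eq_mul]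
  ring

theorem aux_norm1_comb {n : ℕ} (a b : Fin n → ℝ) (s : ℝ) (h0 : 0 ≤ s) (h1 : s ≤ 1) :
    norm1 ((1 - s) • a + s • b) ≤ (1 - s) * norm1 a + s * norm1 b := by
  simp only [norm1, Finset.mul_sum, ← Finset.sum_add_distrib]
  refine Finset.sum_le_sum fun i _ => ?_
  simp only [Pi.add_apply, Pi.smul_apply, smul_eq_mul]
  refine (abs_add_le _ _).trans ?_
  rw [abs_mul, abs_mul, abs_of_nonneg h0, abs_of_nonneg (sub_nonneg.2 h1)]

theorem aux_cost_comb {m n : ℕ} (β : ℝ) (hβ : 0 < β) (K : Matrix (Fin m) (Fin n) ℝ)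
    (T : ℕ) (y : ℕ → Fin m → ℝ) (a b : ℕ → Fin n → ℝ) (s : ℝ) (h0 : 0 ≤ s) (h1 : s ≤ 1) :
    trackCost β K T y (fun t => (1 - s) • a t + s • b t)
      ≤ (1 - s) * trackCost β K T y a + s * trackCost β K T y b
        - s * (1 - s) * ∑ t ∈ Finset.Icc 1 T, (1 / 2) * norm2sq (K.mulVec (a t - b t)) := by
  simp only [trackCost, Finset.mul_sum, ← Finset.sum_add_distrib, ← Finset.sum_sub_distrib]
  refine Finset.sum_le_sum fun t _ => ?_
  have e1 : y t - K.mulVec ((1 - s) • a t + s • b t)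
      = (1 - s) • (y t - K.mulVec (a t)) + s • (y t - K.mulVec (b t)) := by
    rw [Matrix.mulVec_add, Matrix.mulVec_smul, Matrix.mulVec_smul]
    module
  have e2 : (1 - s) • a t + s • b t - ((1 - s) • a (t - 1) + s • b (t - 1))
      = (1 - s) • (a t - a (t - 1)) + s • (b t - b (t - 1)) := by module
  have e3 : norm2sq ((y t - K.mulVec (a t)) - (y t - K.mulVec (b t)))
      = norm2sq (K.mulVec (a t - b t)) := by
    rw [Matrix.mulVec_sub]
    simp only [norm2sq, Pi.sub_apply]
    exact Finset.sum_congr rfl fun i _ => by ring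
  rw [e1, e2, aux_norm2sq_comb, e3]
  have := mul_le_mul_of_nonneg_left
    (aux_norm1_comb (a t - a (t - 1)) (b t - b (t - 1)) s h0 h1) hβ.le
  linarith

theorem aux_proj {m n : ℕ} (K : Matrix (Fin m) (Fin n) ℝ)
    (hK : IsUnit (K.transpose * K).det) (d : Fin n → ℝ) (e : Fin m → ℝ) :
    K.mulVec d ⬝ᵥ (proj K).mulVec e = K.mulVec d ⬝ᵥ e := by
  have h : K.transpose * proj K = K.transpose := by
    rw [proj, pinv, ← Matrix.mul_assoc, ← Matrix.mul_assoc, Matrix.mul_nonsing_inv _ hK,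
      Matrix.one_mul]
  have h2 : ∀ w : Fin m → ℝ, K.mulVec d ⬝ᵥ w = d ⬝ᵥ K.transpose.mulVec w := by
    intro w
    rw [Matrix.dotProduct_mulVec, Matrix.vecMul_transpose]
  rw [h2, h2, Matrix.mulVec_mulVec, h]

theorem aux_term {m n : ℕ} (K : Matrix (Fin m) (Fin n) ℝ)
    (hK : IsUnit (K.transpose * K).det) (a b : Fin n → ℝ) (y z : Fin m → ℝ) :
    (1 / 2) * norm2sq (y - K.mulVec a) - (1 / 2) * norm2sq (y - K.mulVec b)
      ≤ (1 / 2) * norm2sq (z - K.mulVec a) - (1 / 2) * norm2sq (z - K.mulVec b)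
        + (1 / 2) * norm2sq (K.mulVec (a - b))
        + (1 / 2) * norm2sq ((proj K).mulVec (z - y)) := by
  have h1 : (1 / 2) * norm2sq (y - K.mulVec a) - (1 / 2) * norm2sq (y - K.mulVec b)
      = (1 / 2) * norm2sq (z - K.mulVec a) - (1 / 2) * norm2sq (z - K.mulVec b)
        + K.mulVec (a - b) ⬝ᵥ (z - y) := by
    rw [Matrix.mulVec_sub]
    simp only [norm2sq, dotProduct, Finset.mul_sum, ← Finset.sum_add_distrib,
      ← Finset.sum_sub_distrib]
    refine Finset.sum_congr rfl fun i _ => ?_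
    simp only [Pi.sub_apply]
    ring
  have h2 : ∀ u v : Fin m → ℝ, u ⬝ᵥ v ≤ (1 / 2) * norm2sq u + (1 / 2) * norm2sq v := by
    intro u v
    simp only [norm2sq, dotProduct, Finset.mul_sum, ← Finset.sum_add_distrib]
    exact Finset.sum_le_sum fun i _ => by nlinarith [sq_nonneg (u i - v i)]
  have h3 := h2 (K.mulVec (a - b)) ((proj K).mulVec (z - y))
  rw [aux_proj K hK] at h3
  linarith

/-- The suboptimality of the open-loop plan computed from predictions `ŷ` is at most
`Σ_t ½‖P(ŷ_t − y_t)‖²`. -/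
theorem open_loop_suboptimality
    (m n T : ℕ) (hm : 1 ≤ m) (hn : 1 ≤ n) (hT : 1 ≤ T)
    (K : Matrix (Fin m) (Fin n) ℝ) (hK : IsUnit (K.transpose * K).det)
    (β : ℝ) (hβ : 0 < β)
    (y yhat : ℕ → Fin m → ℝ)
    (xhat xstar : ℕ → Fin n → ℝ)
    (hxhat0 : xhat 0 = 0) (hxstar0 : xstar 0 = 0)
    (hxhat : ∀ x : ℕ → Fin n → ℝ, x 0 = 0 →
      trackCost β K T yhat xhat ≤ trackCost β K T yhat x)
    (hxstar : ∀ x : ℕ → Fin n → ℝ, x 0 = 0 →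
      trackCost β K T y xstar ≤ trackCost β K T y x) :
    trackCost β K T y xhat - trackCost β K T y xstar
      ≤ ∑ t ∈ Finset.Icc 1 T, (1 / 2) * norm2sq ((proj K).mulVec (yhat t - y t)) := by
  set Q := ∑ t ∈ Finset.Icc 1 T, (1 / 2) * norm2sq (K.mulVec (xhat t - xstar t)) with hQ
  have hQ0 : 0 ≤ Q := Finset.sum_nonneg fun t _ =>
    mul_nonneg (by norm_num) (aux_norm2sq_nonneg _)
  have hD0 := hxhat xstar hxstar0
  have key : ∀ s : ℝ, 0 < s → s ≤ 1 →
      (1 - s) * Q ≤ trackCost β K T yhat xstar - trackCost β K T yhat xhat := by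
    intro s h0 h1
    have ha := hxhat (fun t => (1 - s) • xhat t + s • xstar t) (by simp [hxhat0, hxstar0])
    have hb := aux_cost_comb β hβ K T yhat xhat xstar s h0.le h1
    have hc : s * ((1 - s) * Q)
        ≤ s * (trackCost β K T yhat xstar - trackCost β K T yhat xhat) := by
      rw [← hQ] at hb
      nlinarith
    exact le_of_mul_le_mul_left hc h0
  have strong : Q ≤ trackCost β K T yhat xstar - trackCost β K T yhat xhat := by
    by_contra hlt
    push Not at hlt
    have hQpos : 0 < Q := by linarith
    set D := trackCost β K T yhat xstar - trackCost β K T yhat xhat with hD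
    have hk := key ((Q - D) / (2 * Q)) (div_pos (by linarith) (by linarith))
      ((div_le_one (by linarith)).2 (by linarith))
    have : (1 - (Q - D) / (2 * Q)) * Q = (Q + D) / 2 := by
      field_simp
      ring
    linarith
  have hsum : trackCost β K T y xhat - trackCost β K T y xstar
      ≤ trackCost β K T yhat xhat - trackCost β K T yhat xstar + Q
        + ∑ t ∈ Finset.Icc 1 T, (1 / 2) * norm2sq ((proj K).mulVec (yhat t - y t)) := by
    simp only [hQ, trackCost, ← Finset.sum_add_distrib, ← Finset.sum_sub_distrib]
    refine Finset.sum_le_sum fun t _ => ?_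
    have := aux_term K hK (xhat t) (xstar t) (y t) (yhat t)
    linarith
  linarith
end

section
/- Let ȳ := (1/T) Σ_{t=1}^T y_t and x̄ := K†ȳ − (β/T)(KᵀK)⁻¹𝟙. If every component of x̄ is positive, then x̄ minimizes g(x) := Σ_{t=1}^T (1/2)‖y_t − Kx‖₂² + β‖x‖₁ over ℝⁿ, and the optimal static cost equals g(x̄) = (1/2) Σ_{t=1}^T ( ‖(I − P)y_t‖₂² + ‖P(y_t − ȳ)‖₂² ) − β²·𝟙ᵀ(KᵀK)⁻¹𝟙/(2T) + β·𝟙ᵀK†ȳ. -/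
open Finset Matrix

theorem norm2sq_eq_dot {m : ℕ} (v : Fin m → ℝ) : norm2sq v = v ⬝ᵥ v := by
  simp [norm2sq, dotProduct, pow_two]

theorem norm2sq_add' {m : ℕ} (v w : Fin m → ℝ) :
    norm2sq (v + w) = norm2sq v + 2 * (v ⬝ᵥ w) + norm2sq w := by
  simp only [norm2sq_eq_dot, add_dotProduct, dotProduct_add, dotProduct_comm w v]
  ring

theorem dot_mulVec_tr {m n : ℕ} (K : Matrix (Fin m) (Fin n) ℝ) (v : Fin m → ℝ)
    (w : Fin n → ℝ) : v ⬝ᵥ K.mulVec w = K.transpose.mulVec v ⬝ᵥ w := by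
  rw [dotProduct_mulVec, mulVec_transpose]

/-- If the candidate static solution `x̄ = K†ȳ − (β/T)(KᵀK)⁻¹𝟙` has positive components,
then it minimizes the static cost `g`, and the optimal static cost has the stated
closed form. -/
theorem static_optimum_formula
    (m n T : ℕ) (hm : 1 ≤ m) (hn : 1 ≤ n) (hT : 1 ≤ T)
    (K : Matrix (Fin m) (Fin n) ℝ) (hK : IsUnit (K.transpose * K).det)
    (β : ℝ) (hβ : 0 < β)
    (y : ℕ → Fin m → ℝ)
    (ybar : Fin m → ℝ) (hybar : ybar = ((T : ℝ))⁻¹ • ∑ t ∈ Finset.Icc 1 T, y t)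
    (xbar : Fin n → ℝ)
    (hxbar : xbar = (pinv K).mulVec ybar - (β / (T : ℝ)) • (K.transpose * K)⁻¹.mulVec 1)
    (hpos : ∀ i, 0 < xbar i) :
    (∀ x : Fin n → ℝ,
      (∑ t ∈ Finset.Icc 1 T, (1 / 2) * norm2sq (y t - K.mulVec xbar)) + β * norm1 xbar
        ≤ (∑ t ∈ Finset.Icc 1 T, (1 / 2) * norm2sq (y t - K.mulVec x)) + β * norm1 x) ∧
    (∑ t ∈ Finset.Icc 1 T, (1 / 2) * norm2sq (y t - K.mulVec xbar)) + β * norm1 xbar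
      = (1 / 2) * (∑ t ∈ Finset.Icc 1 T,
            (norm2sq ((1 - proj K).mulVec (y t)) + norm2sq ((proj K).mulVec (y t - ybar))))
        - β ^ 2 * ((1 : Fin n → ℝ) ⬝ᵥ (K.transpose * K)⁻¹.mulVec 1) / (2 * (T : ℝ))
        + β * ((1 : Fin n → ℝ) ⬝ᵥ (pinv K).mulVec ybar) := by
  have hT0 : (T : ℝ) ≠ 0 := by
    have : T ≠ 0 := by omega
    exact_mod_cast this
  have hGG : (K.transpose * K) * (K.transpose * K)⁻¹ = 1 := Matrix.mul_nonsing_inv _ hK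
  have hKpinv : K.transpose * (K * pinv K) = K.transpose := by
    rw [pinv, ← Matrix.mul_assoc, ← Matrix.mul_assoc, hGG, Matrix.one_mul]
  have hsumy : ∑ t ∈ Finset.Icc 1 T, y t = (T : ℝ) • ybar := by
    rw [hybar, smul_smul, mul_inv_cancel₀ hT0, one_smul]
  set u : Fin n → ℝ := (K.transpose * K)⁻¹.mulVec 1 with hu
  have hGu : K.transpose.mulVec (K.mulVec u) = 1 := by
    rw [hu, Matrix.mulVec_mulVec, Matrix.mulVec_mulVec, hGG, Matrix.one_mulVec]
  have hGp : ∀ v, K.transpose.mulVec (K.mulVec ((pinv K).mulVec v)) = K.transpose.mulVec v := by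
    intro v
    rw [Matrix.mulVec_mulVec, Matrix.mulVec_mulVec, Matrix.mul_assoc, hKpinv]
  have hGx : K.transpose.mulVec (K.mulVec xbar)
      = K.transpose.mulVec ybar - (β / (T : ℝ)) • (1 : Fin n → ℝ) := by
    rw [hxbar, Matrix.mulVec_sub, Matrix.mulVec_sub, hGp, Matrix.mulVec_smul,
      Matrix.mulVec_smul, hGu]
  have hn1 : norm1 xbar = (1 : Fin n → ℝ) ⬝ᵥ xbar := by
    simp only [norm1, one_dotProduct]
    exact Finset.sum_congr rfl fun i _ => abs_of_pos (hpos i)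
  constructor
  · intro x
    have h1 : (1 : Fin n → ℝ) ⬝ᵥ x ≤ norm1 x := by
      simp only [norm1, one_dotProduct]
      exact Finset.sum_le_sum fun i _ => le_abs_self _
    have hres : ∑ t ∈ Finset.Icc 1 T, K.transpose.mulVec (y t - K.mulVec xbar)
        = β • (1 : Fin n → ℝ) := by
      simp only [Matrix.mulVec_sub, Finset.sum_sub_distrib, hGx]
      rw [← Matrix.mulVec_sum, hsumy, Matrix.mulVec_smul]
      ext i
      simp
      field_simp
    have hcross : ∑ t ∈ Finset.Icc 1 T, (y t - K.mulVec xbar) ⬝ᵥ K.mulVec (xbar - x)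
        = β * ((1 : Fin n → ℝ) ⬝ᵥ xbar - (1 : Fin n → ℝ) ⬝ᵥ x) := by
      simp only [dot_mulVec_tr]
      rw [← sum_dotProduct, hres, smul_dotProduct, dotProduct_sub, smul_eq_mul]
    have hexp : ∀ t, (1 / 2) * norm2sq (y t - K.mulVec x)
        = (1 / 2) * norm2sq (y t - K.mulVec xbar)
          + (y t - K.mulVec xbar) ⬝ᵥ K.mulVec (xbar - x)
          + (1 / 2) * norm2sq (K.mulVec (xbar - x)) := by
      intro t
      have : y t - K.mulVec x = (y t - K.mulVec xbar) + K.mulVec (xbar - x) := by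
        rw [Matrix.mulVec_sub]; abel
      rw [this, norm2sq_add']
      ring
    have hnn : 0 ≤ ∑ t ∈ Finset.Icc 1 T, (1 / 2) * norm2sq (K.mulVec (xbar - x)) := by
      refine Finset.sum_nonneg fun t _ => ?_
      unfold norm2sq
      positivity
    simp only [hexp, Finset.sum_add_distrib]
    rw [hcross, hn1]
    have := mul_le_mul_of_nonneg_left h1 hβ.le
    linarith
  · have hdec : ∀ t, y t - K.mulVec xbar = (1 - proj K).mulVec (y t)
        + ((proj K).mulVec (y t - ybar) + (β / (T : ℝ)) • K.mulVec u) := by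
      intro t
      rw [hxbar, Matrix.mulVec_sub, Matrix.mulVec_smul, Matrix.mulVec_sub, Matrix.sub_mulVec,
        Matrix.one_mulVec, proj, Matrix.mulVec_mulVec]
      abel
    have hKa : ∀ v, K.transpose.mulVec ((1 - proj K).mulVec v) = 0 := by
      intro v
      rw [Matrix.mulVec_mulVec, Matrix.mul_sub, Matrix.mul_one, proj, hKpinv, sub_self,
        Matrix.zero_mulVec]
    have hab : ∀ v w, (1 - proj K).mulVec v ⬝ᵥ (proj K).mulVec w = 0 := by
      intro v w
      have : (proj K).mulVec w = K.mulVec ((pinv K).mulVec w) := by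
        rw [proj, Matrix.mulVec_mulVec]
      rw [this, dot_mulVec_tr, hKa, zero_dotProduct]
    have hac : ∀ v, (1 - proj K).mulVec v ⬝ᵥ K.mulVec u = 0 := by
      intro v
      rw [dot_mulVec_tr, hKa, zero_dotProduct]
    have hcc : norm2sq ((β / (T : ℝ)) • K.mulVec u)
        = (β / (T : ℝ)) ^ 2 * ((1 : Fin n → ℝ) ⬝ᵥ u) := by
      rw [norm2sq_eq_dot, smul_dotProduct, dotProduct_smul, dot_mulVec_tr, hGu]
      simp only [smul_eq_mul]
      ring
    have hb : ∑ t ∈ Finset.Icc 1 T,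
        (proj K).mulVec (y t - ybar) ⬝ᵥ ((β / (T : ℝ)) • K.mulVec u) = 0 := by
      have h0 : ∑ t ∈ Finset.Icc 1 T, (y t - ybar) = 0 := by
        rw [Finset.sum_sub_distrib, hsumy]
        ext i
        simp
      rw [← sum_dotProduct, ← Matrix.mulVec_sum, h0, Matrix.mulVec_zero, zero_dotProduct]
    have hexp : ∀ t, (1 / 2) * norm2sq (y t - K.mulVec xbar)
        = (1 / 2) * (norm2sq ((1 - proj K).mulVec (y t))
            + norm2sq ((proj K).mulVec (y t - ybar)))
          + (proj K).mulVec (y t - ybar) ⬝ᵥ ((β / (T : ℝ)) • K.mulVec u)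
          + (1 / 2) * ((β / (T : ℝ)) ^ 2 * ((1 : Fin n → ℝ) ⬝ᵥ u)) := by
      intro t
      rw [hdec, norm2sq_add', norm2sq_add', hcc, dotProduct_add, hab,
        dotProduct_smul ((β / (T : ℝ))) ((1 - proj K).mulVec (y t)), hac, smul_zero]
      ring
    have hx1 : (1 : Fin n → ℝ) ⬝ᵥ xbar
        = (1 : Fin n → ℝ) ⬝ᵥ (pinv K).mulVec ybar - β / (T : ℝ) * ((1 : Fin n → ℝ) ⬝ᵥ u) := by
      rw [hxbar, dotProduct_sub, dotProduct_smul, smul_eq_mul]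
    rw [Finset.sum_congr rfl fun t _ => hexp t, Finset.sum_add_distrib, Finset.sum_add_distrib,
      hb, ← Finset.mul_sum, hn1, hx1, Finset.sum_const, Nat.card_Icc, nsmul_eq_mul,
      Nat.add_sub_cancel]
    field_simp
    ring
end
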